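/- arXiv:2405.10088 — 2 statements merged into one kernel-verified Lean document; each statement's English description precedes it below -/
import Mathlib

section
/- Let Γ be a finite vertex-transitive graph and p ≥ 3 a prime. If Aut(Γ) contains a p-cycle, then either: (a) μ(Γ) = 2, so Γ ≅ Θ[K_m] or Γ ≅ Θ[mK_1] for some m ≥ 2 and vertex-transitive graph Θ; or (b) Γ ≅ Θ[Σ_p], where Σ_p is a circulant graph on p vertices and Θ is a vertex-transitive graph; in case (b), μ(Γ) = 2 if Σ_p is isomorphic to K_p or to pK_1, and μ(Γ) = p − 1 otherwise. -/
/-!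
The support of a `p`-cycle in `Aut Γ` is a module of `Γ` inducing a circulant graph `Σ` on `p`
vertices. A circulant graph of prime order with an edge is connected, and so is its complement
unless it is complete. So if a translate of the module under `Aut Γ` overlaps the module without
being equal to it, then `Σ` is edgeless or complete, and two vertices of the module are twins.

If `Γ` has twins, transposing them shows that the motion is 2, and the twin classes are both blocks
and modules, which makes `Γ` a lexicographic product over a complete or edgeless graph. If `Γ` is
twin-free, the module is a block and `Γ ≅ Θ[Σ]`. The reflection `i ↦ -i` of the block extends to an
automorphism moving at most `p - 1` vertices. Conversely, the automorphisms of `Σ` are affine, so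
an automorphism of `Γ` that moves a vertex of a block fixes at most one vertex of that block.
Affinity is the graph case of Burnside's theorem on permutation groups of prime degree, and is
obtained by P. Müller's argument: the permutation is interpolated by a polynomial, and power sums
over the neighbourhood of `0` show that its degree is at most 1.
-/

open Equiv Pointwise

/-- A graph is vertex-transitive if its automorphism group is transitive on the
vertices. -/
def IsVertexTransitive {V : Type*} (Γ : SimpleGraph V) : Prop :=
  ∀ u v : V, ∃ e : Γ ≃g Γ, e u = v

/-- The motion of a graph: the least number of vertices moved by a non-identity
automorphism (i.e. the minimal degree of its automorphism group). -/
noncomputable def motion {V : Type*} [Fintype V] [DecidableEq V] (Γ : SimpleGraph V) : ℕ :=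
  sInf {n | ∃ e : Γ ≃g Γ, (e.toEquiv : Equiv.Perm V) ≠ 1 ∧
    (Equiv.Perm.support (e.toEquiv : Equiv.Perm V)).card = n}

/-- The lexicographic product `Θ[Δ]`: the vertex set is `VΔ × VΘ`, and
`(δ₁,θ₁) ∼ (δ₂,θ₂)` iff `θ₁ ∼ θ₂` in `Θ`, or `θ₁ = θ₂` and `δ₁ ∼ δ₂` in `Δ`. -/
def lexProd {α β : Type*} (Θ : SimpleGraph α) (Δ : SimpleGraph β) :
    SimpleGraph (β × α) :=
  SimpleGraph.fromRel (fun x y => Θ.Adj x.2 y.2 ∨ (x.2 = y.2 ∧ Δ.Adj x.1 y.1))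

/-- A circulant graph on `ZMod p`: a Cayley graph of the cyclic group of order `p`,
i.e. a graph invariant under all translations. -/
def IsCirculant {p : ℕ} (Sg : SimpleGraph (ZMod p)) : Prop :=
  ∀ c x y : ZMod p, Sg.Adj x y ↔ Sg.Adj (x + c) (y + c)

section SumTaylor

open Polynomial

variable {R : Type*} [CommRing R]

theorem exists_sum_pow_ne_zero [IsDomain R] {U : Finset R} (h0 : 0 ∉ U) (hU : U.Nonempty) :
    ∃ m, 0 < m ∧ m ≤ U.card ∧ ∑ u ∈ U, u ^ m ≠ 0 := by
  by_contra! hsum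
  let v : Fin U.card → R := fun i => U.equivFin.symm i
  have hv : Function.Injective v := Subtype.val_injective.comp U.equivFin.symm.injective
  have hv0 : v = 0 := by
    refine Matrix.eq_zero_of_forall_pow_sum_mul_pow_eq_zero hv fun i => ?_
    calc ∑ j, v j * v j ^ (i : ℕ) = ∑ j, v j ^ (i + 1 : ℕ) :=
          Finset.sum_congr rfl fun j _ => (pow_succ' (v j) i).symm
      _ = ∑ u : U, (u : R) ^ (i + 1 : ℕ) :=
          U.equivFin.symm.sum_comp fun u => (u : R) ^ (i + 1 : ℕ)
      _ = ∑ u ∈ U, u ^ (i + 1 : ℕ) := U.sum_coe_sort fun u => u ^ (i + 1 : ℕ)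
      _ = 0 := hsum _ (Nat.succ_pos i) i.2
  obtain ⟨u, hu⟩ := hU
  have hvu : v (U.equivFin ⟨u, hu⟩) = u := by simp [v]
  rw [hv0, Pi.zero_apply] at hvu
  exact h0 (hvu ▸ hu)

theorem coeff_sum_taylor {U : Finset R} {g : R[X]} {m i : ℕ} (hm : 0 < m)
    (hsum : ∀ j, 0 < j → j < m → ∑ u ∈ U, u ^ j = 0) (hi : g.natDegree ≤ i + m) :
    (∑ u ∈ U, taylor u g).coeff i =
      U.card * g.coeff i + (m + i).choose i * g.coeff (m + i) * ∑ u ∈ U, u ^ m := by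
  have hdeg : (hasseDeriv i g).natDegree < m + 1 := by
    have := natDegree_hasseDeriv_le g i
    omega
  have hcoeff : (∑ u ∈ U, taylor u g).coeff i = ∑ j ∈ Finset.range (m + 1),
      ((j + i).choose i * g.coeff (j + i)) * ∑ u ∈ U, u ^ j := by
    simp only [finsetSum_coeff, taylor_coeff, eval_eq_sum_range' hdeg, hasseDeriv_coeff,
      Finset.mul_sum]
    exact Finset.sum_comm
  obtain ⟨m, rfl⟩ := Nat.exists_eq_add_one.2 hm
  rw [hcoeff, Finset.sum_range_succ, Finset.sum_range_succ', Finset.sum_eq_zero fun j hj => ?_]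
  · simp [mul_comm]
  · rw [hsum (j + 1) j.succ_pos (by simpa using hj), mul_zero]

/- Compare coefficients of degree `k * natDegree f - m`. On the right only the term `#U * f ^ k`
reaches this degree, since `2 ≤ natDegree f`. -/
theorem sum_pow_eq_zero_of_sum_taylor_pow [IsDomain R] {U : Finset R} {f : R[X]} {k m : ℕ}
    (hf : 2 ≤ f.natDegree)
    (hcomp : ∑ u ∈ U, taylor u (f ^ k) = (∑ u ∈ U, taylor u (X ^ k)).comp f)
    (hm : 0 < m) (hmk : m ≤ k * f.natDegree)
    (hchoose : ((k * f.natDegree).choose m : R) ≠ 0)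
    (hsum : ∀ j, 0 < j → j < m → ∑ u ∈ U, u ^ j = 0) :
    ∑ u ∈ U, u ^ m = 0 := by
  obtain ⟨i, hi⟩ := Nat.exists_eq_add_of_le hmk
  have hleft : (∑ u ∈ U, taylor u (f ^ k)).coeff i = U.card * (f ^ k).coeff i +
      (m + i).choose i * (f ^ k).coeff (m + i) * ∑ u ∈ U, u ^ m :=
    coeff_sum_taylor hm hsum (by rw [natDegree_pow]; omega)
  have hright : ((∑ u ∈ U, taylor u (X ^ k)).comp f).coeff i = U.card * (f ^ k).coeff i := by
    let P : R[X] := ∑ u ∈ U, taylor u (X ^ k) - C (U.card : R) * X ^ k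
    have hP : ∀ l, k < l + m → P.coeff l = 0 := fun l hl => by
      rw [coeff_sub, coeff_C_mul,
        coeff_sum_taylor hm hsum (natDegree_X_pow_le k |>.trans hl.le), coeff_X_pow k (m + l),
        if_neg (by omega)]
      ring
    have hPf : (P.comp f).coeff i = 0 := by
      rw [comp, eval₂_eq_sum_range, finsetSum_coeff]
      refine Finset.sum_eq_zero fun l _ => ?_
      rw [coeff_C_mul]
      rcases lt_or_ge k (l + m) with hl | hl
      · rw [hP l hl, zero_mul]
      · have hfl : (f ^ l).natDegree < i := by rw [natDegree_pow]; nlinarith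
        rw [coeff_eq_zero_of_natDegree_lt hfl, mul_zero]
    simpa [P, sub_eq_zero] using hPf
  have hlead : (f ^ k).coeff (m + i) ≠ 0 := by
    rw [← hi, ← natDegree_pow, coeff_natDegree, leadingCoeff_ne_zero]
    exact pow_ne_zero k (ne_zero_of_natDegree_gt hf)
  have hprod : (m + i).choose i * (f ^ k).coeff (m + i) * ∑ u ∈ U, u ^ m = 0 := by
    rw [hcomp, hright] at hleft
    exact left_eq_add.1 hleft
  refine (mul_eq_zero.1 hprod).resolve_left (mul_ne_zero ?_ hlead)
  rwa [← Nat.choose_symm_add, ← hi]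

theorem sum_taylor_comp [IsDomain R] [Fintype R] {U : Finset R} {f g : R[X]}
    (hinj : Function.Injective fun x => f.eval x)
    (hU : ∀ x, ∀ u ∈ U, f.eval (x + u) - f.eval x ∈ U)
    (hdeg : g.natDegree * f.natDegree < Fintype.card R) :
    ∑ u ∈ U, taylor u (g.comp f) = (∑ u ∈ U, taylor u g).comp f := by
  refine eq_of_natDegree_lt_card_of_eval_eq' _ _ Finset.univ (fun x _ => ?_) (max_lt ?_ ?_)
  · have hbij : Set.BijOn (fun u => f.eval (x + u) - f.eval x) U U := by
      have hmaps : Set.MapsTo (fun u => f.eval (x + u) - f.eval x) U U := hU x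
      have hinjOn : Set.InjOn (fun u => f.eval (x + u) - f.eval x) U :=
        fun u _ v _ h => add_left_cancel (hinj (sub_left_injective h))
      exact ⟨hmaps, hinjOn, Finset.surjOn_of_injOn_of_card_le _ hmaps hinjOn le_rfl⟩
    simp only [eval_finsetSum, eval_comp, taylor_eval]
    refine Finset.sum_nbij (fun u => f.eval (x + u) - f.eval x) hbij.mapsTo hbij.injOn
      hbij.surjOn fun u _ => ?_
    rw [add_sub_cancel]
  · refine (natDegree_sum_le_of_forall_le U _ fun u _ => ?_).trans_lt hdeg
    rw [natDegree_taylor, natDegree_comp]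
  · rw [natDegree_comp]
    refine (Nat.mul_le_mul_right _ (natDegree_sum_le_of_forall_le U _ fun u _ => ?_)).trans_lt hdeg
    rw [natDegree_taylor]

theorem natDegree_le_one_of_forall_sub_mem {p : ℕ} [Fact p.Prime] {U : Finset (ZMod p)}
    (h0 : 0 ∉ U) (hne : U.Nonempty) (hcard : 2 * U.card < p) {f : (ZMod p)[X]}
    (hdeg : f.natDegree < p) (hinj : Function.Injective fun x => f.eval x)
    (hU : ∀ x, ∀ u ∈ U, f.eval (x + u) - f.eval x ∈ U) : f.natDegree ≤ 1 := by
  by_contra! hn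
  set n := f.natDegree
  let k := (p - 1) / n
  have hlt : k * n < p := by
    have : k * n ≤ p - 1 := Nat.div_mul_le_self _ _
    omega
  have hUk : U.card ≤ k * n := by
    have h1 : p - 1 < k * n + n := Nat.lt_div_mul_add (by omega)
    have h2 : n ≤ k * n := Nat.le_mul_of_pos_left _ (Nat.div_pos (by omega) (by omega))
    omega
  have hcomp : ∑ u ∈ U, taylor u (f ^ k) = (∑ u ∈ U, taylor u (X ^ k)).comp f := by
    simpa using sum_taylor_comp (g := X ^ k) hinj hU (by simpa using hlt)
  have hsum : ∀ m, 0 < m → m ≤ k * n → ∑ u ∈ U, u ^ m = 0 := by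
    intro m
    induction m using Nat.strong_induction_on with
    | _ m ih =>
      intro hm hmk
      refine sum_pow_eq_zero_of_sum_taylor_pow hn hcomp hm hmk ?_
        fun j hj hjm => ih j hjm hj (hjm.le.trans hmk)
      rw [Ne, ZMod.natCast_eq_zero_iff, ← (Fact.out : p.Prime).coprime_iff_not_dvd]
      exact (Fact.out : p.Prime).coprime_choose_of_lt hlt hmk
  obtain ⟨m, hm, hmU, hmsum⟩ := exists_sum_pow_ne_zero h0 hne
  exact hmsum (hsum m hm (hmU.trans hUk))

theorem exists_affine_of_forall_sub_mem {p : ℕ} [Fact p.Prime] {U : Finset (ZMod p)}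
    (h0 : 0 ∉ U) (hne : U.Nonempty) (hcard : 2 * U.card < p) {σ : ZMod p → ZMod p}
    (hinj : Function.Injective σ) (hU : ∀ x, ∀ u ∈ U, σ (x + u) - σ x ∈ U) :
    ∃ a b, ∀ x, σ x = a * x + b := by
  let f := Lagrange.interpolate Finset.univ id σ
  have heval (x : ZMod p) : f.eval x = σ x :=
    Lagrange.eval_interpolate_at_node (v := id) σ (Set.injOn_id _) (Finset.mem_univ x)
  have hdeg : f.natDegree < p := by
    rcases eq_or_ne f 0 with hf | hf
    · rw [hf, natDegree_zero]
      exact (Fact.out : p.Prime).pos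
    · rw [natDegree_lt_iff_degree_lt hf]
      simpa only [Finset.card_univ, ZMod.card] using
        Lagrange.degree_interpolate_lt (s := Finset.univ) (v := id) σ (Set.injOn_id _)
  obtain ⟨a, b, hab⟩ := exists_eq_X_add_C_of_natDegree_le_one <|
    natDegree_le_one_of_forall_sub_mem (f := f) h0 hne hcard hdeg
      (by simpa only [heval] using hinj) (by simpa only [heval] using hU)
  exact ⟨a, b, fun x => by simp [← heval, hab]⟩

end SumTaylor

section LexProd

variable {V W α β : Type*}

theorem lexProd_adj {Θ : SimpleGraph α} {Δ : SimpleGraph β} {x y : β × α} :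
    (lexProd Θ Δ).Adj x y ↔ Θ.Adj x.2 y.2 ∨ x.2 = y.2 ∧ Δ.Adj x.1 y.1 := by
  have hne : Θ.Adj x.2 y.2 ∨ x.2 = y.2 ∧ Δ.Adj x.1 y.1 → x ≠ y := by
    rintro (h | h) rfl
    exacts [h.ne rfl, h.2.ne rfl]
  rw [lexProd, SimpleGraph.fromRel_adj, Θ.adj_comm y.2, Δ.adj_comm y.1, eq_comm (a := y.2),
    or_self]
  exact and_iff_right_of_imp hne

theorem nonempty_lexProd_iso {Θ : SimpleGraph α} {Θ' : SimpleGraph W} (e : Θ ≃g Θ')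
    (Δ : SimpleGraph β) : Nonempty (lexProd Θ Δ ≃g lexProd Θ' Δ) :=
  ⟨⟨(Equiv.refl β).prodCongr e.toEquiv, by simp [lexProd_adj, e.map_adj_iff]⟩⟩

theorem IsVertexTransitive.of_iso {Γ : SimpleGraph V} {Γ' : SimpleGraph W}
    (hvt : IsVertexTransitive Γ) (e : Γ ≃g Γ') : IsVertexTransitive Γ' := fun u v => by
  obtain ⟨f, hf⟩ := hvt (e.symm u) (e.symm v)
  exact ⟨(e.symm.trans f).trans e, by simp [hf]⟩

theorem IsVertexTransitive.isPretransitive {Γ : SimpleGraph V} (hvt : IsVertexTransitive Γ) :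
    MulAction.IsPretransitive (Γ ≃g Γ) V :=
  ⟨hvt⟩

end LexProd

section Module

variable {V : Type*} {Γ : SimpleGraph V} {B C : Set V}

/-- A module (homogeneous set) of a graph: every vertex outside `B` is adjacent to all of `B` or
to none of it. -/
def IsModule (Γ : SimpleGraph V) (B : Set V) : Prop :=
  ∀ x ∉ B, ∀ a ∈ B, ∀ b ∈ B, Γ.Adj x a → Γ.Adj x b

theorem IsModule.compl (hB : IsModule Γ B) : IsModule Γᶜ B := fun x hx a ha b hb hxa => by
  rw [SimpleGraph.compl_adj] at hxa ⊢
  exact ⟨fun h => hx (h ▸ hb), fun h => hxa.2 (hB x hx b hb a ha h)⟩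

theorem IsModule.smul (hB : IsModule Γ B) (e : Γ ≃g Γ) : IsModule Γ (e • B) := by
  rintro x hx _ ⟨a, ha, rfl⟩ _ ⟨b, hb, rfl⟩ hxa
  rw [Set.mem_smul_set_iff_inv_smul_mem] at hx
  obtain ⟨y, rfl⟩ := MulAction.surjective e x
  rw [inv_smul_smul] at hx
  exact e.map_adj_iff.2 (hB y hx a ha b hb (e.map_adj_iff.1 hxa))

theorem IsModule.adj_iff_of_disjoint (hB : IsModule Γ B) (hC : IsModule Γ C) (hBC : Disjoint B C)
    {b b' c c' : V} (hb : b ∈ B) (hb' : b' ∈ B) (hc : c ∈ C) (hc' : c' ∈ C) :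
    Γ.Adj b c ↔ Γ.Adj b' c' := by
  have hadj {b b' c c' : V} (hb : b ∈ B) (hb' : b' ∈ B) (hc : c ∈ C) (hc' : c' ∈ C)
      (h : Γ.Adj b c) : Γ.Adj b' c' :=
    have hbc' : Γ.Adj b c' := hC b (hBC.notMem_of_mem_left hb) c hc c' hc' h
    (hB c' (hBC.notMem_of_mem_right hc') b hb b' hb' hbc'.symm).symm
  exact ⟨hadj hb hb' hc hc', hadj hb' hb hc' hc⟩

theorem IsModule.exists_iso_toEquiv_eq (hB : IsModule Γ B) {τ : Perm V}
    (hfix : ∀ x ∉ B, τ x = x) (hτ : ∀ a ∈ B, ∀ b ∈ B, Γ.Adj (τ a) (τ b) ↔ Γ.Adj a b) :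
    ∃ e : Γ ≃g Γ, e.toEquiv = τ := by
  have hmem : ∀ a ∈ B, τ a ∈ B := fun a ha => by
    by_contra h
    exact h ((τ.injective (hfix _ h)).symm ▸ ha)
  have hout : ∀ x ∉ B, ∀ a ∈ B, Γ.Adj x (τ a) ↔ Γ.Adj x a := fun x hx a ha =>
    ⟨hB x hx _ (hmem a ha) a ha, hB x hx a ha _ (hmem a ha)⟩
  refine ⟨⟨τ, fun {a b} => ?_⟩, rfl⟩
  by_cases ha : a ∈ B <;> by_cases hb : b ∈ B
  · exact hτ a ha b hb
  · rw [hfix b hb, Γ.adj_comm, Γ.adj_comm a]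
    exact hout b hb a ha
  · rw [hfix a ha]
    exact hout a ha b hb
  · rw [hfix a ha, hfix b hb]

/-- The quotient graph on the translates of a block `B`: two of them are adjacent if some edge of
`Γ` joins them. -/
def blockGraph (Γ : SimpleGraph V) (B : Set V) : SimpleGraph (MulAction.orbit (Γ ≃g Γ) B) :=
  SimpleGraph.fromRel fun C D => ∃ c ∈ C.1, ∃ d ∈ D.1, Γ.Adj c d

theorem isVertexTransitive_blockGraph (Γ : SimpleGraph V) (B : Set V) :
    IsVertexTransitive (blockGraph Γ B) := fun C D => by
  obtain ⟨e, rfl⟩ := MulAction.exists_smul_eq (Γ ≃g Γ) C D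
  have hadj (C D : MulAction.orbit (Γ ≃g Γ) B) :
      (∃ c ∈ (e • C).1, ∃ d ∈ (e • D).1, Γ.Adj c d) ↔ ∃ c ∈ C.1, ∃ d ∈ D.1, Γ.Adj c d := by
    simp [MulAction.orbit.coe_smul, ← Set.image_smul, RelIso.smul_def, e.map_adj_iff]
  refine ⟨⟨MulAction.toPerm e, fun {C D} => ?_⟩, rfl⟩
  rw [blockGraph, SimpleGraph.fromRel_adj, SimpleGraph.fromRel_adj, MulAction.toPerm_apply,
    MulAction.toPerm_apply, (MulAction.injective e).ne_iff, hadj, hadj]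

theorem IsModule.blockGraph_adj_iff (hB : IsModule Γ B) (hblock : MulAction.IsBlock (Γ ≃g Γ) B)
    {C D : MulAction.orbit (Γ ≃g Γ) B} (hne : C ≠ D) {c d : V} (hc : c ∈ C.1) (hd : d ∈ D.1) :
    (blockGraph Γ B).Adj C D ↔ Γ.Adj c d := by
  obtain ⟨⟨_, e, rfl⟩, ⟨_, f, rfl⟩⟩ := C, D
  have hdisj : Disjoint (e • B) (f • B) := hblock fun h => hne (Subtype.ext h)
  rw [blockGraph, SimpleGraph.fromRel_adj]
  constructor
  · rintro ⟨-, ⟨c', hc', d', hd', h⟩ | ⟨d', hd', c', hc', h⟩⟩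
    · exact ((hB.smul e).adj_iff_of_disjoint (hB.smul f) hdisj hc' hc hd' hd).1 h
    · exact ((hB.smul e).adj_iff_of_disjoint (hB.smul f) hdisj hc' hc hd' hd).1 h.symm
  · exact fun h => ⟨hne, Or.inl ⟨c, hc, d, hd, h⟩⟩

theorem IsModule.nonempty_iso_lexProd_blockGraph (hvt : IsVertexTransitive Γ)
    (hB : IsModule Γ B) (hblock : MulAction.IsBlock (Γ ≃g Γ) B) (hne : B.Nonempty) {β : Type*}
    {Δ : SimpleGraph β} (φ : Δ ≃g Γ.induce B) :
    Nonempty (Γ ≃g lexProd (blockGraph Γ B) Δ) := by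
  have := hvt.isPretransitive
  choose g hg using fun C : MulAction.orbit (Γ ≃g Γ) B => MulAction.mem_orbit_iff.1 C.2
  have hmem (x : β × MulAction.orbit (Γ ≃g Γ) B) : g x.2 (φ x.1).1 ∈ x.2.1 :=
    hg x.2 ▸ Set.smul_mem_smul_set (φ x.1).2
  have hpart := (hblock.isBlockSystem hne).1.2
  let F (x : β × MulAction.orbit (Γ ≃g Γ) B) : V := g x.2 (φ x.1)
  have hinj : F.Injective := by
    rintro ⟨b, C⟩ ⟨b', C'⟩ h
    obtain rfl : C = C' := Subtype.ext <| (hpart (F (b, C))).unique ⟨C.2, hmem (b, C)⟩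
      ⟨C'.2, h ▸ hmem (b', C')⟩
    obtain rfl : b = b' := φ.injective (Subtype.ext ((g C).injective h))
    rfl
  have hsurj : F.Surjective := fun v => by
    obtain ⟨C, ⟨hC, hv⟩, -⟩ := hpart v
    obtain ⟨u, hu, rfl⟩ : v ∈ g ⟨C, hC⟩ • B := hg ⟨C, hC⟩ ▸ hv
    exact ⟨(φ.symm ⟨u, hu⟩, ⟨C, hC⟩), by simp [F, RelIso.smul_def]⟩
  refine ⟨SimpleGraph.Iso.symm ⟨Equiv.ofBijective F ⟨hinj, hsurj⟩, fun {x y} => ?_⟩⟩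
  change Γ.Adj (g x.2 (φ x.1)) (g y.2 (φ y.1)) ↔ _
  rw [lexProd_adj]
  by_cases hxy : x.2 = y.2
  · rw [hxy, (g y.2).map_adj_iff, ← φ.map_adj_iff, SimpleGraph.comap_adj]
    simp
  · simp [hxy, hB.blockGraph_adj_iff hblock hxy (hmem x) (hmem y)]

theorem IsModule.exists_iso_lexProd [Finite V] (hvt : IsVertexTransitive Γ) (hB : IsModule Γ B)
    (hblock : MulAction.IsBlock (Γ ≃g Γ) B) (hne : B.Nonempty) {β : Type*}
    {Δ : SimpleGraph β} (φ : Δ ≃g Γ.induce B) :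
    ∃ (k : ℕ) (Θ : SimpleGraph (Fin k)), IsVertexTransitive Θ ∧ Nonempty (Γ ≃g lexProd Θ Δ) := by
  have := Fintype.ofFinite (MulAction.orbit (Γ ≃g Γ) B)
  let e := (blockGraph Γ B).overFinIso rfl
  obtain ⟨f⟩ := hB.nonempty_iso_lexProd_blockGraph hvt hblock hne φ
  obtain ⟨f'⟩ := nonempty_lexProd_iso e Δ
  exact ⟨_, _, (isVertexTransitive_blockGraph Γ B).of_iso e, ⟨f.trans f'⟩⟩

end Module

section Motion

variable {V : Type*} [Fintype V] [DecidableEq V] {Γ : SimpleGraph V} {n : ℕ}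

theorem motion_eq {e : Γ ≃g Γ} (he : (e.toEquiv : Perm V) ≠ 1)
    (hle : (Perm.support (e.toEquiv : Perm V)).card ≤ n)
    (hlow : ∀ f : Γ ≃g Γ, (f.toEquiv : Perm V) ≠ 1 →
      n ≤ (Perm.support (f.toEquiv : Perm V)).card) : motion Γ = n := by
  refine le_antisymm (le_trans (Nat.sInf_le ⟨e, he, rfl⟩) hle) (le_csInf ⟨_, e, he, rfl⟩ ?_)
  rintro _ ⟨f, hf, rfl⟩
  exact hlow f hf

end Motion

section Twins

variable {V : Type*} {Γ : SimpleGraph V} {u v w : V}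

/-- Two vertices are twins if they have the same neighbours apart from each other, that is, if
they form a module. A vertex is a twin of itself. -/
def AreTwins (Γ : SimpleGraph V) (u v : V) : Prop :=
  IsModule Γ {u, v}

/-- A graph is twin-free if no two distinct vertices are twins. -/
def IsTwinFree (Γ : SimpleGraph V) : Prop :=
  ∀ ⦃u v⦄, AreTwins Γ u v → u = v

theorem areTwins_iff : AreTwins Γ u v ↔ ∀ w, w ≠ u → w ≠ v → (Γ.Adj w u ↔ Γ.Adj w v) := by
  simp only [AreTwins, IsModule, Set.mem_insert_iff, Set.mem_singleton_iff, not_or,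
    forall_eq_or_imp, forall_eq, and_imp]
  grind

theorem AreTwins.refl (v : V) : AreTwins Γ v v :=
  areTwins_iff.2 fun _ _ _ => Iff.rfl

theorem AreTwins.symm (h : AreTwins Γ u v) : AreTwins Γ v u := by
  rwa [AreTwins, Set.pair_comm]

theorem AreTwins.trans (huv : AreTwins Γ u v) (hvw : AreTwins Γ v w) : AreTwins Γ u w := by
  rw [areTwins_iff] at *
  intro x hxu hxw
  rcases eq_or_ne x v with rfl | hxv
  · rcases eq_or_ne u w with rfl | huw
    · rfl
    · rw [Γ.adj_comm x u, hvw u hxu.symm huw, Γ.adj_comm u w, huv w huw.symm hxw.symm, Γ.adj_comm]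
  · exact (huv x hxu hxv).trans (hvw x hxv hxw)

theorem AreTwins.map (h : AreTwins Γ u v) (e : Γ ≃g Γ) : AreTwins Γ (e u) (e v) := by
  simpa only [AreTwins, Set.smul_set_insert, Set.smul_set_singleton, RelIso.smul_def] using
    IsModule.smul h e

theorem AreTwins.motion_eq_two [Fintype V] [DecidableEq V] (h : AreTwins Γ u v) (hne : u ≠ v) :
    motion Γ = 2 := by
  have hswap : ∀ a ∈ ({u, v} : Set V), ∀ b ∈ ({u, v} : Set V),
      Γ.Adj (swap u v a) (swap u v b) ↔ Γ.Adj a b := by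
    simp [Γ.adj_comm]
  obtain ⟨e, he⟩ := h.exists_iso_toEquiv_eq
    (fun x hx => swap_apply_of_ne_of_ne (fun hxu => hx (Or.inl hxu)) fun hxv => hx (Or.inr hxv))
    hswap
  refine motion_eq (e := e) ?_ ?_ fun f hf => Perm.two_le_card_support_of_ne_one hf
  · rwa [he, Ne, swap_eq_one_iff]
  · rw [he, Perm.card_support_swap hne]

/-- The set of all twins of a vertex. -/
def twinClass (Γ : SimpleGraph V) (v : V) : Set V :=
  {w | AreTwins Γ v w}

theorem AreTwins.twinClass_eq (h : AreTwins Γ u v) : twinClass Γ u = twinClass Γ v :=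
  Set.ext fun _ => ⟨h.symm.trans, h.trans⟩

theorem smul_twinClass (e : Γ ≃g Γ) (v : V) : e • twinClass Γ v = twinClass Γ (e v) := by
  ext w
  obtain ⟨w, rfl⟩ := e.surjective w
  refine Set.smul_mem_smul_set_iff.trans ⟨fun h => AreTwins.map h e, fun h => ?_⟩
  simpa [twinClass] using AreTwins.map h e.symm

theorem isBlock_twinClass (Γ : SimpleGraph V) (v : V) :
    MulAction.IsBlock (Γ ≃g Γ) (twinClass Γ v) := by
  refine MulAction.isBlock_iff_smul_eq_of_mem.2 fun e u hu heu => ?_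
  have hu : AreTwins Γ v u := hu
  have heu : AreTwins Γ v (e u) := heu
  rw [smul_twinClass, (hu.map e).twinClass_eq, heu.twinClass_eq]

theorem isModule_twinClass (Γ : SimpleGraph V) (v : V) : IsModule Γ (twinClass Γ v) := by
  intro x hx a ha b hb
  have hab : AreTwins Γ a b := AreTwins.trans (AreTwins.symm ha) hb
  exact (areTwins_iff.1 hab x (fun h => hx (h ▸ ha)) fun h => hx (h ▸ hb)).1

theorem induce_twinClass_eq_top_or_bot (Γ : SimpleGraph V) (v : V) :
    Γ.induce (twinClass Γ v) = ⊤ ∨ Γ.induce (twinClass Γ v) = ⊥ := by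
  refine or_iff_not_imp_right.2 fun hbot => ?_
  obtain ⟨a, b, hab⟩ := SimpleGraph.ne_bot_iff_exists_adj.1 hbot
  have htwins (x y : twinClass Γ v) : AreTwins Γ x y := AreTwins.trans (AreTwins.symm x.2) y.2
  have hadj : ∀ x y z : twinClass Γ v, Γ.Adj x y → x ≠ z → Γ.Adj x z := fun x y z hxy hxz =>
    (areTwins_iff.1 (htwins y z) x hxy.ne (Subtype.coe_injective.ne hxz)).1 hxy
  ext x y
  refine ⟨SimpleGraph.Adj.ne, fun hxy => ?_⟩
  rcases eq_or_ne a x with rfl | hax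
  · exact hadj a b y hab hxy
  · exact hadj x a y (hadj a b x hab hax).symm hxy

theorem AreTwins.exists_iso_lexProd [Finite V] (hvt : IsVertexTransitive Γ) (h : AreTwins Γ u v)
    (hne : u ≠ v) :
    ∃ (m k : ℕ) (Θ : SimpleGraph (Fin k)), 2 ≤ m ∧ IsVertexTransitive Θ ∧
      (Nonempty (Γ ≃g lexProd Θ (⊤ : SimpleGraph (Fin m))) ∨
        Nonempty (Γ ≃g lexProd Θ (⊥ : SimpleGraph (Fin m)))) := by
  have hlex {Δ : SimpleGraph (Fin (Nat.card (twinClass Γ u)))} :=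
    (isModule_twinClass Γ u).exists_iso_lexProd (Δ := Δ) hvt (isBlock_twinClass Γ u)
      ⟨u, AreTwins.refl u⟩
  have hm : 2 ≤ Nat.card (twinClass Γ u) := by
    rw [Nat.card_coe_set_eq, ← Set.ncard_pair hne]
    exact Set.ncard_le_ncard (Set.pair_subset (AreTwins.refl u) h)
  let ι : Fin (Nat.card (twinClass Γ u)) ≃ twinClass Γ u := (Finite.equivFin _).symm
  rcases induce_twinClass_eq_top_or_bot Γ u with htop | hbot
  · rw [htop] at hlex
    obtain ⟨k, Θ, hΘ, hiso⟩ := hlex (SimpleGraph.Iso.completeGraph ι)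
    exact ⟨_, k, Θ, hm, hΘ, Or.inl hiso⟩
  · rw [hbot] at hlex
    obtain ⟨k, Θ, hΘ, hiso⟩ := hlex (Δ := ⊥) ⟨ι, Iff.rfl⟩
    exact ⟨_, k, Θ, hm, hΘ, Or.inr hiso⟩

end Twins

section Circulant

variable {p : ℕ} {Sg : SimpleGraph (ZMod p)}

theorem IsCirculant.compl (hS : IsCirculant Sg) : IsCirculant Sgᶜ := fun c x y => by
  simp only [SimpleGraph.compl_adj, ← hS c x y, ne_eq, add_left_inj]

theorem IsCirculant.adj_iff_adj_zero_sub (hS : IsCirculant Sg) {x y : ZMod p} :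
    Sg.Adj x y ↔ Sg.Adj 0 (y - x) := by
  simpa [sub_eq_add_neg] using hS (-x) x y

theorem IsCirculant.preconnected [Fact p.Prime] (hS : IsCirculant Sg) (hbot : Sg ≠ ⊥) :
    Sg.Preconnected := by
  obtain ⟨i, j, hij⟩ := SimpleGraph.ne_bot_iff_exists_adj.1 hbot
  have hreach (x : ZMod p) (n : ℕ) : Sg.Reachable x (x + n • (j - i)) := by
    induction n with
    | zero => simp
    | succ n ih =>
      refine ih.trans (SimpleGraph.Adj.reachable ?_)
      rwa [hS.adj_iff_adj_zero_sub, add_sub_add_left_eq_sub, succ_nsmul, add_sub_cancel_left,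
        ← hS.adj_iff_adj_zero_sub]
  intro x y
  obtain ⟨n, hn⟩ : y - x ∈ AddSubmonoid.multiples (j - i) :=
    mem_multiples_of_prime_card (p := p) (Nat.card_zmod p) (sub_ne_zero.2 hij.ne')
  rw [← add_sub_cancel x y, ← hn]
  exact hreach x n

theorem IsCirculant.exists_affine_of_two_mul_degree_lt [Fact p.Prime] [DecidableRel Sg.Adj]
    (hS : IsCirculant Sg) (hbot : Sg ≠ ⊥) (hdeg : 2 * Sg.degree 0 < p) (σ : Sg ↪g Sg) :
    ∃ a b, ∀ x, σ x = a * x + b := by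
  refine exists_affine_of_forall_sub_mem (U := Sg.neighborFinset 0) (by simp) ?_ hdeg σ.injective
    fun x u hu => ?_
  · obtain ⟨i, j, hij⟩ := SimpleGraph.ne_bot_iff_exists_adj.1 hbot
    exact ⟨j - i, by simpa using hS.adj_iff_adj_zero_sub.1 hij⟩
  · rw [SimpleGraph.mem_neighborFinset] at hu ⊢
    rwa [← hS.adj_iff_adj_zero_sub, σ.map_adj_iff, hS.adj_iff_adj_zero_sub, add_sub_cancel_left]

theorem IsCirculant.exists_affine [Fact p.Prime] (hS : IsCirculant Sg) (hbot : Sg ≠ ⊥)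
    (htop : Sg ≠ ⊤) (σ : Sg ↪g Sg) : ∃ a b, ∀ x, σ x = a * x + b := by
  classical
  have hpos : 0 < p := (Fact.out : p.Prime).pos
  rcases lt_or_ge (2 * Sg.degree 0) p with hdeg | hdeg
  · exact hS.exists_affine_of_two_mul_degree_lt hbot hdeg σ
  · refine hS.compl.exists_affine_of_two_mul_degree_lt (by rwa [Ne, compl_eq_bot]) ?_
      (SimpleGraph.Embedding.complEquiv σ)
    rw [SimpleGraph.degree_compl, ZMod.card]
    omega

theorem IsCirculant.apply_eq_self_of_two_fixed [Fact p.Prime] (hS : IsCirculant Sg)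
    (hbot : Sg ≠ ⊥) (htop : Sg ≠ ⊤) (σ : Sg ↪g Sg) {i j : ZMod p} (hi : σ i = i) (hj : σ j = j)
    (hij : i ≠ j) (k : ZMod p) : σ k = k := by
  obtain ⟨a, b, hσ⟩ := hS.exists_affine hbot htop σ
  rw [hσ] at hi hj ⊢
  have ha : a = 1 := mul_right_cancel₀ (sub_ne_zero.2 hij) (by linear_combination hi - hj)
  have hb : b = 0 := by simpa [ha] using hi
  rw [ha, hb, one_mul, add_zero]

end Circulant

section Cycle

variable {n : ℕ} [NeZero n]

theorem isCirculant_of_adj_add_one {Sg : SimpleGraph (ZMod n)}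
    (hadj : ∀ i j, Sg.Adj i j ↔ Sg.Adj (i + 1) (j + 1)) : IsCirculant Sg := by
  have hnat (m : ℕ) (i j : ZMod n) : Sg.Adj i j ↔ Sg.Adj (i + m) (j + m) := by
    induction m with
    | zero => simp
    | succ m ih => rw [ih, hadj, Nat.cast_succ, add_assoc, add_assoc]
  exact fun c i j => by simpa using hnat c.val i j

theorem exists_zmod_embedding_of_isCycle {α : Type*} [Fintype α] [DecidableEq α] {g : Perm α}
    (hg : g.IsCycle) (hcard : g.support.card = n) :
    ∃ ψ : ZMod n ↪ α, Set.range ψ = g.support ∧ ∀ i, g (ψ i) = ψ (i + 1) := by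
  have horder : orderOf g = n := hg.orderOf.trans hcard
  obtain ⟨a, ha, -⟩ := id hg
  let ψ (i : ZMod n) : α := (g ^ i.val) a
  have hnat (m : ℕ) : ψ m = (g ^ m) a := by
    simp only [ψ, ZMod.val_natCast, ← horder, pow_mod_orderOf]
  have hinj : ψ.Injective := fun i j hij => by
    have hpow : g ^ i.val = g ^ j.val := hg.pow_eq_pow_iff.2 ⟨a, ha, hij⟩
    exact ZMod.val_injective n <| pow_injOn_Iio_orderOf (horder.symm ▸ i.val_lt)
      (horder.symm ▸ j.val_lt) hpow
  refine ⟨⟨ψ, hinj⟩, Set.eq_of_subset_of_subset ?_ fun x hx => ?_, fun i => ?_⟩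
  · rintro _ ⟨i, rfl⟩
    exact Perm.pow_apply_mem_support.2 (Perm.mem_support.2 ha)
  · obtain ⟨m, rfl⟩ := hg.exists_pow_eq ha (Perm.mem_support.1 hx)
    exact ⟨m, hnat m⟩
  · have hi : (i + 1 : ZMod n) = (i.val + 1 : ℕ) := by simp
    rw [hi]
    exact (Perm.mul_apply g _ a).symm.trans <| (pow_succ' g i.val) ▸ (hnat (i.val + 1)).symm

end Cycle

section CirculantModule

variable {V : Type*} {Γ : SimpleGraph V} {n p : ℕ}

/-- An embedding of `ZMod n` onto a module of `Γ` along which `Γ` pulls back to a circulant graph.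
This is what survives of an `n`-cycle in the automorphism group. -/
structure IsCirculantModule (Γ : SimpleGraph V) (ψ : ZMod n ↪ V) : Prop where
  isCirculant : IsCirculant (Γ.comap ψ)
  isModule : IsModule Γ (Set.range ψ)

theorem comap_compl {W : Type*} (Γ : SimpleGraph V) (f : W ↪ V) :
    Γᶜ.comap f = (Γ.comap f)ᶜ := by
  ext
  simp

theorem IsCirculantModule.compl {ψ : ZMod n ↪ V} (hψ : IsCirculantModule Γ ψ) :
    IsCirculantModule Γᶜ ψ where
  isCirculant := comap_compl Γ ψ ▸ hψ.isCirculant.compl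
  isModule := hψ.isModule.compl

theorem range_trans_toEmbedding {W : Type*} (ψ : W ↪ V) (e : Γ ≃g Γ) :
    Set.range (ψ.trans e.toEquiv.toEmbedding) = e • Set.range ψ :=
  Set.range_comp e ψ

theorem IsCirculantModule.map {ψ : ZMod n ↪ V} (hψ : IsCirculantModule Γ ψ) (e : Γ ≃g Γ) :
    IsCirculantModule Γ (ψ.trans e.toEquiv.toEmbedding) where
  isCirculant := by
    have hcomap : Γ.comap (ψ.trans e.toEquiv.toEmbedding) = Γ.comap ψ := by
      ext; exact e.map_adj_iff
    exact hcomap ▸ hψ.isCirculant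
  isModule := range_trans_toEmbedding ψ e ▸ hψ.isModule.smul e

theorem exists_isCirculantModule [Fintype V] [DecidableEq V] [NeZero n] {e : Γ ≃g Γ}
    (hcyc : Perm.IsCycle (e.toEquiv : Perm V))
    (hcard : (Perm.support (e.toEquiv : Perm V)).card = n) :
    ∃ ψ : ZMod n ↪ V, IsCirculantModule Γ ψ := by
  obtain ⟨ψ, hrange, hψ⟩ := exists_zmod_embedding_of_isCycle hcyc hcard
  have hadd (i : ZMod n) : e (ψ i) = ψ (i + 1) := hψ i
  refine ⟨ψ, isCirculant_of_adj_add_one fun i j => ?_, ?_⟩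
  · rw [SimpleGraph.comap_adj, SimpleGraph.comap_adj, ← hadd, ← hadd, e.map_adj_iff]
  · rintro x hx _ ⟨i, rfl⟩ _ ⟨j, rfl⟩ hxi
    have hfix : e x = x := by
      rw [hrange, Finset.mem_coe, Perm.notMem_support] at hx
      exact hx
    have hadj (m : ℕ) : Γ.Adj x (ψ (i + m)) := by
      induction m with
      | zero => simpa using hxi
      | succ m ih => simpa [hfix, hadd, add_assoc] using e.map_adj_iff.2 ih
    simpa using hadj (j - i).val

theorem IsCirculantModule.comap_eq_bot [Fact p.Prime] {ψ : ZMod p ↪ V}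
    (hψ : IsCirculantModule Γ ψ) {C : Set V} (hC : IsModule Γ C) {i j : ZMod p} (hi : ψ i ∈ C)
    (hj : ψ j ∉ C) {c : V} (hc : c ∈ C) (hcψ : c ∉ Set.range ψ) (hadj : ¬Γ.Adj c (ψ j)) :
    Γ.comap ψ = ⊥ := by
  by_contra hbot
  obtain ⟨w⟩ := hψ.isCirculant.preconnected hbot i j
  obtain ⟨d, -, hfst, hsnd⟩ := w.exists_boundary_dart (ψ ⁻¹' C) hi hj
  have hdc : Γ.Adj (ψ d.snd) c := hC _ hsnd _ hfst c hc d.adj.symm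
  exact hadj (hψ.isModule c hcψ _ ⟨d.snd, rfl⟩ _ ⟨j, rfl⟩ hdc.symm)

theorem IsCirculantModule.comap_eq_bot_or_top [Fact p.Prime] {ψ : ZMod p ↪ V}
    (hψ : IsCirculantModule Γ ψ) {C : Set V} (hC : IsModule Γ C) {i j : ZMod p} (hi : ψ i ∈ C)
    (hj : ψ j ∉ C) {c : V} (hc : c ∈ C) (hcψ : c ∉ Set.range ψ) :
    Γ.comap ψ = ⊥ ∨ Γ.comap ψ = ⊤ := by
  by_cases hadj : Γ.Adj c (ψ j)
  · have hbot : Γᶜ.comap ψ = ⊥ :=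
      hψ.compl.comap_eq_bot hC.compl hi hj hc hcψ fun h => h.2 hadj
    rw [comap_compl, compl_eq_bot] at hbot
    exact Or.inr hbot
  · exact Or.inl (hψ.comap_eq_bot hC hi hj hc hcψ hadj)

theorem IsCirculantModule.areTwins_of_comap_eq {ψ : ZMod n ↪ V} (hψ : IsCirculantModule Γ ψ)
    (h : Γ.comap ψ = ⊥ ∨ Γ.comap ψ = ⊤) (i j : ZMod n) : AreTwins Γ (ψ i) (ψ j) := by
  refine areTwins_iff.2 fun w hwi hwj => ?_
  by_cases hw : w ∈ Set.range ψ
  · obtain ⟨k, rfl⟩ := hw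
    rw [← SimpleGraph.comap_adj, ← SimpleGraph.comap_adj (f := ψ)]
    rw [ψ.injective.ne_iff] at hwi hwj
    rcases h with h | h <;> simp [h, hwi, hwj]
  · exact ⟨hψ.isModule w hw _ ⟨i, rfl⟩ _ ⟨j, rfl⟩, hψ.isModule w hw _ ⟨j, rfl⟩ _ ⟨i, rfl⟩⟩

theorem IsCirculantModule.comap_ne [Fact p.Prime] {ψ : ZMod p ↪ V}
    (hψ : IsCirculantModule Γ ψ) (htf : IsTwinFree Γ) : Γ.comap ψ ≠ ⊥ ∧ Γ.comap ψ ≠ ⊤ :=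
  not_or.1 fun h => zero_ne_one (ψ.injective (htf (hψ.areTwins_of_comap_eq h 0 1)))

theorem IsCirculantModule.isBlock_range [Fact p.Prime] {ψ : ZMod p ↪ V}
    (hψ : IsCirculantModule Γ ψ) (htf : IsTwinFree Γ) :
    MulAction.IsBlock (Γ ≃g Γ) (Set.range ψ) := by
  rw [MulAction.isBlock_iff_smul_eq_of_nonempty]
  rintro e ⟨_, hi, i, rfl⟩
  have hcard : (e • Set.range ψ).ncard = (Set.range ψ).ncard := Set.ncard_smul_set e _
  have hfin : (Set.range ψ).Finite := Set.finite_range ψ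
  have hmodule : IsModule Γ (e • Set.range ψ) := hψ.isModule.smul e
  by_contra hne
  have hsub : ¬e • Set.range ψ ⊆ Set.range ψ := fun h =>
    hne (Set.eq_of_subset_of_ncard_le h hcard.ge hfin)
  have hsup : ¬Set.range ψ ⊆ e • Set.range ψ := fun h =>
    hne (Set.eq_of_subset_of_ncard_le h hcard.le hfin.smul_set).symm
  obtain ⟨c, hc, hcψ⟩ := Set.not_subset.1 hsub
  obtain ⟨_, ⟨j, rfl⟩, hj⟩ := Set.not_subset.1 hsup
  exact not_or.2 (hψ.comap_ne htf) (hψ.comap_eq_bot_or_top hmodule hi hj hc hcψ)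

theorem IsCirculantModule.ne_two {ψ : ZMod n ↪ V} (hψ : IsCirculantModule Γ ψ)
    (htf : IsTwinFree Γ) : n ≠ 2 := by
  rintro rfl
  have hrange : Set.range ψ = {ψ 0, ψ 1} :=
    Set.ext fun x => Fin.exists_fin_two.trans (or_congr eq_comm eq_comm)
  have htwins : AreTwins Γ (ψ 0) (ψ 1) := by
    rw [AreTwins, ← hrange]
    exact hψ.isModule
  exact zero_ne_one (ψ.injective (htf htwins))

theorem IsCirculantModule.apply_eq_self_of_two_fixed [Fact p.Prime] {ψ : ZMod p ↪ V}
    (hψ : IsCirculantModule Γ ψ) (htf : IsTwinFree Γ) {e : Γ ≃g Γ} {i j : ZMod p}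
    (hi : e (ψ i) = ψ i) (hj : e (ψ j) = ψ j) (hij : i ≠ j) (k : ZMod p) : e (ψ k) = ψ k := by
  have hblock : e • Set.range ψ = Set.range ψ :=
    (hψ.isBlock_range htf).smul_eq_of_mem ⟨i, rfl⟩ ⟨i, hi.symm⟩
  choose σ hσ using fun x => hblock ▸ Set.smul_mem_smul_set (a := e) (Set.mem_range_self (f := ψ) x)
  have hσ (x : ZMod p) : ψ (σ x) = e (ψ x) := hσ x
  have hinj : σ.Injective := fun x y hxy =>
    ψ.injective (e.injective (by rw [← hσ, ← hσ, hxy]))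
  let f : Γ.comap ψ ↪g Γ.comap ψ :=
    ⟨⟨σ, hinj⟩, by simp [hσ, e.map_adj_iff]⟩
  have hf : f k = k := hψ.isCirculant.apply_eq_self_of_two_fixed (hψ.comap_ne htf).1
    (hψ.comap_ne htf).2 f (ψ.injective ((hσ i).trans hi)) (ψ.injective ((hσ j).trans hj)) hij k
  rw [← hσ]
  exact congrArg ψ hf

theorem IsCirculantModule.exists_reflection [NeZero n] {ψ : ZMod n ↪ V}
    (hψ : IsCirculantModule Γ ψ) :
    ∃ e : Γ ≃g Γ, (∀ i, e (ψ i) = ψ (-i)) ∧ ∀ x ∉ Set.range ψ, e x = x := by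
  classical
  let τ : Perm V := (Equiv.neg (ZMod n)).viaFintypeEmbedding ψ
  have hneg (i : ZMod n) : τ (ψ i) = ψ (-i) :=
    Perm.viaFintypeEmbedding_apply_image (Equiv.neg (ZMod n)) ψ i
  have hfix : ∀ x ∉ Set.range ψ, τ x = x := fun x hx =>
    Perm.viaFintypeEmbedding_apply_notMem_range (Equiv.neg (ZMod n)) ψ hx
  have hadj : ∀ a ∈ Set.range ψ, ∀ b ∈ Set.range ψ, Γ.Adj (τ a) (τ b) ↔ Γ.Adj a b := by
    rintro _ ⟨i, rfl⟩ _ ⟨j, rfl⟩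
    rw [hneg, hneg, Γ.adj_comm (ψ i)]
    simpa using hψ.isCirculant (i + j) (-i) (-j)
  obtain ⟨e, he⟩ := hψ.isModule.exists_iso_toEquiv_eq hfix hadj
  have he (x : V) : e x = τ x := congrArg (· x) he
  exact ⟨e, fun i => (he _).trans (hneg i), fun x hx => (he x).trans (hfix x hx)⟩

section Motion

variable [Fintype V] [DecidableEq V]

theorem IsCirculantModule.sub_one_le_card_support [Fact p.Prime] {ψ : ZMod p ↪ V}
    (hψ : IsCirculantModule Γ ψ) (htf : IsTwinFree Γ) {e : Γ ≃g Γ} {k : ZMod p}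
    (hk : e (ψ k) ≠ ψ k) : p - 1 ≤ (Perm.support (e.toEquiv : Perm V)).card := by
  have hfixed : (Finset.univ.filter fun i => e (ψ i) = ψ i).card ≤ 1 :=
    Finset.card_le_one.2 fun i hi j hj => by
      by_contra hij
      exact hk (hψ.apply_eq_self_of_two_fixed htf (Finset.mem_filter.1 hi).2
        (Finset.mem_filter.1 hj).2 hij k)
  have hmoved : (Finset.univ.filter fun i => ¬e (ψ i) = ψ i).card ≤
      (Perm.support (e.toEquiv : Perm V)).card :=
    Finset.card_le_card_of_injOn ψ (by simp [Set.MapsTo]) ψ.injective.injOn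
  have hsum := Finset.card_filter_add_card_filter_not (s := Finset.univ)
    (fun i : ZMod p => e (ψ i) = ψ i)
  rw [Finset.card_univ, ZMod.card] at hsum
  omega

theorem IsCirculantModule.exists_card_support_le [NeZero n] {ψ : ZMod n ↪ V}
    (hψ : IsCirculantModule Γ ψ) (hn : 2 < n) :
    ∃ e : Γ ≃g Γ, (e.toEquiv : Perm V) ≠ 1 ∧
      (Perm.support (e.toEquiv : Perm V)).card ≤ n - 1 := by
  obtain ⟨e, hneg, hfix⟩ := hψ.exists_reflection
  refine ⟨e, fun he => ?_, ?_⟩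
  · have : Fact (2 < n) := ⟨hn⟩
    exact ZMod.neg_one_ne_one (ψ.injective ((hneg 1).symm.trans (congrArg (· (ψ 1)) he)))
  · have hsupp : Perm.support (e.toEquiv : Perm V) ⊆ (Finset.univ.erase 0).map ψ := fun x hx => by
      have hx : e x ≠ x := Perm.mem_support.1 hx
      obtain ⟨i, rfl⟩ := not_imp_comm.1 (hfix x) hx
      have hi : i ≠ 0 := by
        rintro rfl
        exact hx (by rw [hneg, neg_zero])
      simpa using hi
    simpa [ZMod.card] using Finset.card_le_card hsupp

theorem IsCirculantModule.motion_eq_sub_one [Fact p.Prime] {ψ : ZMod p ↪ V}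
    (hψ : IsCirculantModule Γ ψ) (hvt : IsVertexTransitive Γ) (htf : IsTwinFree Γ) :
    motion Γ = p - 1 := by
  have hp : 2 < p := lt_of_le_of_ne (Fact.out : p.Prime).two_le (hψ.ne_two htf).symm
  obtain ⟨e, he, hle⟩ := hψ.exists_card_support_le hp
  refine motion_eq he hle fun f hf => ?_
  obtain ⟨v, hv⟩ : ∃ v, f v ≠ v := by
    by_contra! h
    exact hf (Equiv.ext h)
  obtain ⟨g, rfl⟩ := hvt (ψ 0) v
  exact (hψ.map g).sub_one_le_card_support htf hv

end Motion

theorem IsCirculantModule.exists_iso_lexProd [Finite V] [Fact p.Prime] {ψ : ZMod p ↪ V}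
    (hψ : IsCirculantModule Γ ψ) (hvt : IsVertexTransitive Γ) (htf : IsTwinFree Γ) :
    ∃ (k : ℕ) (Θ : SimpleGraph (Fin k)),
      IsVertexTransitive Θ ∧ Nonempty (Γ ≃g lexProd Θ (Γ.comap ψ)) :=
  hψ.isModule.exists_iso_lexProd hvt (hψ.isBlock_range htf) ⟨ψ 0, 0, rfl⟩
    (SimpleGraph.Embedding.comap ψ Γ).isoInduceRange

end CirculantModule

theorem statement_1_general {V : Type*} [Fintype V] [DecidableEq V] (Γ : SimpleGraph V)
    (hvt : IsVertexTransitive Γ) (p : ℕ) [Fact p.Prime]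
    (hcyc : ∃ e : Γ ≃g Γ, Perm.IsCycle (e.toEquiv : Perm V) ∧
      (Perm.support (e.toEquiv : Perm V)).card = p) :
    (motion Γ = 2 ∧
      ∃ (m k : ℕ) (Θ : SimpleGraph (Fin k)), 2 ≤ m ∧ IsVertexTransitive Θ ∧
        (Nonempty (Γ ≃g lexProd Θ (⊤ : SimpleGraph (Fin m))) ∨
          Nonempty (Γ ≃g lexProd Θ (⊥ : SimpleGraph (Fin m))))) ∨
    (motion Γ = p - 1 ∧
      ∃ (k : ℕ) (Θ : SimpleGraph (Fin k)) (Sp : SimpleGraph (ZMod p)),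
        IsVertexTransitive Θ ∧ IsCirculant Sp ∧ Sp ≠ ⊥ ∧ Sp ≠ ⊤ ∧
          Nonempty (Γ ≃g lexProd Θ Sp)) := by
  obtain ⟨e, hcycle, hcard⟩ := hcyc
  obtain ⟨ψ, hψ⟩ := exists_isCirculantModule hcycle hcard
  by_cases htf : IsTwinFree Γ
  · obtain ⟨k, Θ, hΘ, hiso⟩ := hψ.exists_iso_lexProd hvt htf
    exact Or.inr ⟨hψ.motion_eq_sub_one hvt htf, k, Θ, Γ.comap ψ, hΘ, hψ.isCirculant,
      (hψ.comap_ne htf).1, (hψ.comap_ne htf).2, hiso⟩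
  · obtain ⟨u, v, htwins, hne⟩ : ∃ u v, AreTwins Γ u v ∧ u ≠ v := by
      simpa [IsTwinFree] using htf
    exact Or.inl ⟨htwins.motion_eq_two hne, htwins.exists_iso_lexProd hvt hne⟩

theorem eq_top_of_iso {V W : Type*} {Γ : SimpleGraph V} (e : Γ ≃g (⊤ : SimpleGraph W)) :
    Γ = ⊤ := by
  ext u v
  rw [← e.map_adj_iff, SimpleGraph.top_adj, SimpleGraph.top_adj, e.injective.ne_iff]

theorem eq_bot_of_iso {V W : Type*} {Γ : SimpleGraph V} (e : Γ ≃g (⊥ : SimpleGraph W)) :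
    Γ = ⊥ := by
  ext u v
  rw [← e.map_adj_iff, SimpleGraph.bot_adj, SimpleGraph.bot_adj]

/-- If the automorphism group of a finite vertex-transitive graph
`Γ` contains a `p`-cycle for a prime `p ≥ 3`, then either `μ(Γ) = 2` and `Γ` is a
lexicographic product `Θ[K_m]` or `Θ[m K₁]`, or `Γ ≅ Θ[Σ_p]` for a circulant graph
`Σ_p` on `p` vertices, in which case `μ(Γ) = 2` if `Σ_p ≅ K_p` or `Σ_p ≅ p K₁` and
`μ(Γ) = p - 1` otherwise. -/
theorem statement_1 {V : Type} [Fintype V] [DecidableEq V] (Γ : SimpleGraph V)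
    (hvt : IsVertexTransitive Γ) (p : ℕ) [NeZero p] (hp : p.Prime) (hp3 : 3 ≤ p)
    (hcyc : ∃ e : Γ ≃g Γ, Equiv.Perm.IsCycle (e.toEquiv : Equiv.Perm V) ∧
      (Equiv.Perm.support (e.toEquiv : Equiv.Perm V)).card = p) :
    (motion Γ = 2 ∧
      ∃ (m k : ℕ) (Θ : SimpleGraph (Fin k)), 2 ≤ m ∧ IsVertexTransitive Θ ∧
        (Nonempty (Γ ≃g lexProd Θ (⊤ : SimpleGraph (Fin m))) ∨
         Nonempty (Γ ≃g lexProd Θ (⊥ : SimpleGraph (Fin m))))) ∨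
    (∃ (k : ℕ) (Θ : SimpleGraph (Fin k)) (Sp : SimpleGraph (ZMod p)),
      IsVertexTransitive Θ ∧ IsCirculant Sp ∧ Nonempty (Γ ≃g lexProd Θ Sp) ∧
      ((Nonempty (Sp ≃g (⊤ : SimpleGraph (ZMod p))) ∨
        Nonempty (Sp ≃g (⊥ : SimpleGraph (ZMod p)))) → motion Γ = 2) ∧
      (¬(Nonempty (Sp ≃g (⊤ : SimpleGraph (ZMod p))) ∨
         Nonempty (Sp ≃g (⊥ : SimpleGraph (ZMod p)))) → motion Γ = p - 1)) := by
  have : Fact p.Prime := ⟨hp⟩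
  refine (statement_1_general Γ hvt p hcyc).imp_right ?_
  rintro ⟨hmotion, k, Θ, Sp, hΘ, hSp, hbot, htop, hiso⟩
  refine ⟨k, Θ, Sp, hΘ, hSp, hiso, ?_, fun _ => hmotion⟩
  rintro (⟨⟨e⟩⟩ | ⟨⟨e⟩⟩)
  exacts [absurd (eq_top_of_iso e) htop, absurd (eq_bot_of_iso e) hbot]
end

section
/- Let G be a transitive permutation group on a finite set Ω with |Ω| = n, and suppose that for some prime p the group G contains a p-cycle. Then there exist m, k ∈ ℕ with p ≤ m and n = mk, and transitive permutation groups X ≤ Y of degree m such that X is primitive and contains a p-cycle, and, up to permutation isomorphism, X^k ≤ G ≤ Y ≀ Sym(k), with X^k contained in the base group. Moreover, if p < m, then X is 2-transitive. -/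
open Equiv Pointwise

/-- A permutation group is transitive. -/
def IsTransitivePermGroup {Ω : Type*} (G : Subgroup (Equiv.Perm Ω)) : Prop :=
  ∀ a b : Ω, ∃ g ∈ G, g a = b

/-- A permutation group is 2-transitive. -/
def Is2TransitivePermGroup {Ω : Type*} (G : Subgroup (Equiv.Perm Ω)) : Prop :=
  ∀ a b c d : Ω, a ≠ b → c ≠ d → ∃ g ∈ G, g a = c ∧ g b = d

/-- The element of the imprimitive wreath product determined by a function
`g : ι → Perm Δ` and a permutation `h` of the index set, acting on `Δ × ι` by
`(δ, i) ↦ (g i δ, h i)`. -/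
def wreathPerm {Δ ι : Type*} (g : ι → Equiv.Perm Δ) (h : Equiv.Perm ι) :
    Equiv.Perm (Δ × ι) where
  toFun x := (g x.2 x.1, h x.2)
  invFun x := ((g (h⁻¹ x.2))⁻¹ x.1, h⁻¹ x.2)
  left_inv := by rintro ⟨d, i⟩; simp
  right_inv := by rintro ⟨d, i⟩; simp

/-- The imprimitive wreath product `Y ≀ H` of permutation groups, as a permutation
group on `Δ × ι`.  (The defining set is already a subgroup, so taking the
subgroup closure does not change it.) -/
def wreathProduct {Δ ι : Type*} (Y : Subgroup (Equiv.Perm Δ))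
    (H : Subgroup (Equiv.Perm ι)) : Subgroup (Equiv.Perm (Δ × ι)) :=
  Subgroup.closure {σ | ∃ (g : ι → Equiv.Perm Δ) (h : Equiv.Perm ι),
    (∀ i, g i ∈ Y) ∧ h ∈ H ∧ σ = wreathPerm g h}

/-- The copy `X^ι` of a power of `X` inside the base group of a wreath product,
as a permutation group on `Δ × ι`. -/
def basePower {Δ ι : Type*} (X : Subgroup (Equiv.Perm Δ)) :
    Subgroup (Equiv.Perm (Δ × ι)) :=
  Subgroup.closure {σ | ∃ g : ι → Equiv.Perm Δ, (∀ i, g i ∈ X) ∧ σ = wreathPerm g 1}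

/-- Transport of permutations along a bijection, as a group isomorphism. -/
def permMapEquiv {α β : Type*} (f : α ≃ β) : Equiv.Perm α ≃* Equiv.Perm β where
  toFun g := (f.symm.trans g).trans f
  invFun g := (f.trans g).trans f.symm
  left_inv g := by ext x; simp
  right_inv g := by ext x; simp
  map_mul' g₁ g₂ := by ext x; simp [Equiv.Perm.mul_apply]

/-- Transport of a permutation group along a bijection of the underlying sets.
`mapPermGroup f G` is the permutation group on `β` corresponding to `G` under the
relabelling `f`; thus `G` and `mapPermGroup f G` are permutation isomorphic. -/
def mapPermGroup {α β : Type*} (f : α ≃ β) (G : Subgroup (Equiv.Perm α)) :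
    Subgroup (Equiv.Perm β) :=
  Subgroup.map (permMapEquiv f).toMonoidHom G

/-- A partition of a set. -/
def IsPartition {Ω : Type*} (P : Set (Set Ω)) : Prop :=
  ∀ ω : Ω, ∃! B, B ∈ P ∧ ω ∈ B

/-- A block system for a permutation group: a `G`-invariant partition into sets of
size at least 2. -/
def IsBlockSystem {Ω : Type*} (G : Subgroup (Equiv.Perm Ω)) (P : Set (Set Ω)) : Prop :=
  IsPartition P ∧ (∀ B ∈ P, 2 ≤ B.ncard) ∧
    ∀ g ∈ G, ∀ B ∈ P, (g : Equiv.Perm Ω) '' B ∈ P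

/-- `P` is finer than `Q` (every block of `P` is contained in a block of `Q`). -/
def Finer {Ω : Type*} (P Q : Set (Set Ω)) : Prop := ∀ B ∈ P, ∃ C ∈ Q, B ⊆ C

/-- A system of minimal blocks: a block system such that the only block system finer
than it is itself. -/
def IsMinimalBlockSystem {Ω : Type*} (G : Subgroup (Equiv.Perm Ω))
    (P : Set (Set Ω)) : Prop :=
  IsBlockSystem G P ∧ ∀ Q, IsBlockSystem G Q → Finer Q P → Q = P

/-- A permutation group is primitive: it is transitive and preserves no partition of
the underlying set into at least two sets of size at least two. -/
def IsPrimitivePermGroup {Ω : Type*} (G : Subgroup (Equiv.Perm Ω)) : Prop :=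
  (∀ a b : Ω, ∃ g ∈ G, g a = b) ∧
    ¬ ∃ P : Set (Set Ω), IsBlockSystem G P ∧ 2 ≤ P.ncard

/-!
Let `N ≤ G` be the normal subgroup generated by the `p`-cycles of `G`. Its orbits are permuted by
`G`, and after choosing for each orbit an element of `G` carrying a fixed orbit onto it, `Ω` becomes
`Δ × ι` with the `N`-orbits as fibres. A `p`-cycle of `G` lies in `N`, so it preserves every fibre
and moves points of only one; conjugating by the chosen elements gives copies of it in all fibres.
Hence, for `X` the group generated by the `p`-cycles on `Δ` so obtained, `N ≤ X ^ ι ≤ G`, and `X` is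
transitive because `N` is transitive on each fibre. For `Y` one can take `Sym(Δ)`.

A transitive group generated by cycles of prime order is primitive: if such a cycle `c` moves a
block `B` with distinct points `a, b`, it fixes neither, so `c ^ i` maps `a` to `b` for some `i`;
then `c ^ i` stabilises `B`, and so does `c`, which is a power of `c ^ i` as its order is prime.
Jordan's theorem turns primitivity into 2-transitivity when the `p`-cycle has a fixed point.
-/

open MulAction (IsBlock IsPreprimitive IsPretransitive orbit)

section CycleType

variable {α β : Type*} [Fintype α] [DecidableEq α] [Fintype β] [DecidableEq β]

theorem cycleType_eq_singleton_iff {σ : Perm α} {n : ℕ} :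
    σ.cycleType = {n} ↔ σ.IsCycle ∧ σ.support.card = n := by
  constructor
  · intro h
    have hσ : σ.IsCycle := Perm.card_cycleType_eq_one.mp (by rw [h, Multiset.card_singleton])
    exact ⟨hσ, Multiset.singleton_inj.mp (hσ.cycleType.symm.trans h)⟩
  · rintro ⟨hσ, rfl⟩
    exact hσ.cycleType

theorem cycleType_eq_of_semiconj (e : α ↪ β) {σ : Perm α} {τ : Perm β}
    (hsemi : Function.Semiconj e σ τ) (hfix : ∀ y ∉ Set.range e, τ y = y) :
    τ.cycleType = σ.cycleType := by
  classical
  have hτ : τ = σ.viaEmbedding e := by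
    ext y
    by_cases hy : y ∈ Set.range e
    · obtain ⟨x, rfl⟩ := hy
      rw [Perm.viaEmbedding_apply, hsemi x]
    · rw [Perm.viaEmbedding_apply_of_notMem _ _ _ hy, hfix y hy]
  rw [hτ, Perm.viaEmbedding]
  convert! Perm.cycleType_extendDomain (Equiv.ofInjective e e.injective)

theorem cycleType_permMapEquiv (f : α ≃ β) (σ : Perm α) :
    (permMapEquiv f σ).cycleType = σ.cycleType :=
  cycleType_eq_of_semiconj f.toEmbedding (fun x => by simp [permMapEquiv])
    fun y hy => absurd (f.surjective y) hy

end CycleType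

section CycleSubgroup

variable {α β : Type*} [Fintype α] [DecidableEq α] [Fintype β] [DecidableEq β]

/-- The subgroup generated by the `n`-cycles contained in the permutation group `G`. A permutation
is an `n`-cycle when its cycle type, which does not record fixed points, is `{n}`. -/
def cycleSubgroup (G : Subgroup (Perm α)) (n : ℕ) : Subgroup (Perm α) :=
  Subgroup.closure {c | c ∈ G ∧ c.cycleType = {n}}

theorem cycleSubgroup_le (G : Subgroup (Perm α)) (n : ℕ) : cycleSubgroup G n ≤ G :=
  (Subgroup.closure_le G).mpr fun _ hc => hc.1

theorem mem_cycleSubgroup {G : Subgroup (Perm α)} {n : ℕ} {c : Perm α} (hc : c ∈ G)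
    (hn : c.cycleType = {n}) : c ∈ cycleSubgroup G n :=
  Subgroup.subset_closure ⟨hc, hn⟩

theorem le_normalizer_cycleSubgroup (G : Subgroup (Perm α)) (n : ℕ) :
    G ≤ Subgroup.normalizer (cycleSubgroup G n) :=
  Subgroup.le_normalizer_closure_iff.mpr fun _ hg _ hc =>
    mem_cycleSubgroup (G.mul_mem (G.mul_mem hg hc.1) (G.inv_mem hg))
      (Perm.cycleType_conj.trans hc.2)

theorem cycleSubgroup_mapPermGroup (f : α ≃ β) (G : Subgroup (Perm α)) (n : ℕ) :
    cycleSubgroup (mapPermGroup f G) n = mapPermGroup f (cycleSubgroup G n) := by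
  rw [cycleSubgroup, cycleSubgroup, mapPermGroup, mapPermGroup, MonoidHom.map_closure]
  congr 1
  ext c
  constructor
  · rintro ⟨⟨c, hc, rfl⟩, hn⟩
    exact ⟨c, ⟨hc, (cycleType_permMapEquiv f c).symm.trans hn⟩, rfl⟩
  · rintro ⟨c, ⟨hc, hn⟩, rfl⟩
    exact ⟨⟨c, hc, rfl⟩, (cycleType_permMapEquiv f c).trans hn⟩

end CycleSubgroup

section Primitive

variable {α : Type*}

theorem smul_eq_of_isBlock_of_isCycle {c : Perm α} (hc : c.IsCycle) (hp : (orderOf c).Prime)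
    {B : Set α} (hB : IsBlock (Subgroup.zpowers c) B) (hB' : B.Nontrivial) : c • B = B := by
  by_contra hne
  have hmem_iff (i : ℤ) (b : α) (hb : b ∈ B) (hib : (c ^ i) b ∈ B) : (c ^ i) • B = B :=
    MulAction.isBlock_iff_smul_eq_of_mem.mp hB (g := ⟨c ^ i, i, rfl⟩) hb hib
  have hmoves (b : α) (hb : b ∈ B) : c b ≠ b := fun h =>
    hne (by simpa using hmem_iff 1 b hb (by simpa [h] using hb))
  obtain ⟨a, ha, b, hb, hab⟩ := hB'
  obtain ⟨i, hi⟩ := hc.sameCycle (hmoves a ha) (hmoves b hb)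
  have hstab : c ^ i ∈ MulAction.stabilizer (Perm α) B := hmem_iff i a ha (hi ▸ hb)
  have hcop : IsCoprime (orderOf c : ℤ) i := by
    refine (Nat.prime_iff_prime_int.mp hp).coprime_iff_not_dvd.mpr fun hdvd => hab ?_
    rw [← hi, orderOf_dvd_iff_zpow_eq_one.mp hdvd, Perm.one_apply]
  have hgen : c ∈ Subgroup.zpowers (c ^ i) := by
    rw [mem_zpowers_zpow_iff, Int.gcd_comm]
    exact Int.isCoprime_iff_gcd_eq_one.mp hcop
  exact hne (Subgroup.zpowers_le.mpr hstab hgen)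

theorem isPreprimitive_closure_of_isCycle {S : Set (Perm α)}
    (hS : ∀ c ∈ S, c.IsCycle ∧ (orderOf c).Prime) [IsPretransitive (Subgroup.closure S) α] :
    IsPreprimitive (Subgroup.closure S) α where
  isTrivialBlock_of_isBlock {B} hB := by
    refine B.subsingleton_or_nontrivial.imp_right fun hB' => Set.eq_univ_of_forall fun y => ?_
    have hstab : Subgroup.closure S ≤ MulAction.stabilizer (Perm α) B := by
      refine (Subgroup.closure_le _).mpr fun c hc => ?_
      have hle : Subgroup.zpowers c ≤ Subgroup.closure S :=
        Subgroup.zpowers_le.mpr (Subgroup.subset_closure hc)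
      have hBc : IsBlock (Subgroup.zpowers c) B := fun g₁ g₂ h =>
        hB (g₁ := ⟨g₁, hle g₁.2⟩) (g₂ := ⟨g₂, hle g₂.2⟩) h
      exact smul_eq_of_isBlock_of_isCycle (hS c hc).1 (hS c hc).2 hBc hB'
    obtain ⟨b, hb⟩ := hB'.nonempty
    obtain ⟨g, rfl⟩ := MulAction.exists_smul_eq (Subgroup.closure S) b y
    have hgB : (g : Perm α) • B = B := hstab g.2
    exact hgB ▸ Set.smul_mem_smul_set hb

theorem isPreprimitive_cycleSubgroup [Fintype α] [DecidableEq α] {G : Subgroup (Perm α)} {p : ℕ}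
    (hp : p.Prime) [h : IsPretransitive (cycleSubgroup G p) α] :
    IsPreprimitive (cycleSubgroup G p) α := by
  unfold cycleSubgroup at h ⊢
  refine isPreprimitive_closure_of_isCycle fun c hc => ?_
  obtain ⟨hcyc, hcard⟩ := cycleType_eq_singleton_iff.mp hc.2
  exact ⟨hcyc, by rwa [hcyc.orderOf, hcard]⟩

theorem isTransitivePermGroup_iff {G : Subgroup (Perm α)} :
    IsTransitivePermGroup G ↔ IsPretransitive G α :=
  ⟨fun h => ⟨fun a b => let ⟨g, hg, hab⟩ := h a b; ⟨⟨g, hg⟩, hab⟩⟩,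
    fun h a b => let ⟨g, hab⟩ := h.exists_smul_eq a b; ⟨g, g.2, hab⟩⟩

theorem IsBlockSystem.isBlock {G : Subgroup (Perm α)} {P : Set (Set α)}
    (hP : IsBlockSystem G P) {B : Set α} (hB : B ∈ P) : IsBlock G B :=
  MulAction.isBlock_iff_smul_eq_of_mem.mpr fun g a ha hga =>
    (hP.1 (g • a)).unique ⟨hP.2.2 g g.2 B hB, Set.smul_mem_smul_set ha⟩ ⟨hB, hga⟩

theorem isPrimitivePermGroup_of_isPreprimitive {G : Subgroup (Perm α)} [IsPreprimitive G α] :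
    IsPrimitivePermGroup G := by
  refine ⟨isTransitivePermGroup_iff.mpr inferInstance, ?_⟩
  rintro ⟨P, hP, hcard⟩
  have huniv : ∀ B ∈ P, B = Set.univ := fun B hB =>
    (hP.isBlock hB).subsingleton_or_eq_univ.resolve_left
      (Set.one_lt_ncard_iff_nontrivial_and_finite.mp (hP.2.1 B hB)).1.not_subsingleton
  obtain ⟨⟨B, hB, C, hC, hne⟩, -⟩ := Set.one_lt_ncard_iff_nontrivial_and_finite.mp hcard
  exact hne ((huniv B hB).trans (huniv C hC).symm)

theorem is2TransitivePermGroup_of_isCycle_mem [Fintype α] [DecidableEq α]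
    {G : Subgroup (Perm α)} [IsPreprimitive G α] {c : Perm α} (hcG : c ∈ G) (hc : c.IsCycle)
    (hlt : c.support.card < Fintype.card α) : Is2TransitivePermGroup G := by
  have hfixed : ((c.support : Set α)ᶜ).ncard = (Fintype.card α - c.support.card - 1) + 1 := by
    rw [Set.ncard_compl, Set.ncard_coe_finset, Nat.card_eq_fintype_card]
    omega
  have htwo : MulAction.IsMultiplyPretransitive G α 2 := by
    have := hc.two_le_card_support
    refine MulAction.IsPreprimitive.is_two_pretransitive inferInstance hfixed ?_
      (Perm.isPretransitive_of_isCycle_mem hc hcG)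
    rw [Nat.card_eq_fintype_card]
    omega
  intro a b x y hab hxy
  obtain ⟨g, hga, hgb⟩ := MulAction.is_two_pretransitive_iff.mp htwo hab hxy
  exact ⟨g, g.2, hga, hgb⟩

end Primitive

section BaseGroup

variable {Δ ι : Type*}

/-- The inclusion of the base group `Sym(Δ)^ι` of the wreath product into `Sym(Δ × ι)`. -/
def baseHom (Δ ι : Type*) : (ι → Perm Δ) →* Perm (Δ × ι) where
  toFun g := wreathPerm g 1
  map_one' := rfl
  map_mul' _ _ := rfl

@[simp]
theorem baseHom_apply (g : ι → Perm Δ) (u : Δ × ι) : baseHom Δ ι g u = (g u.2 u.1, u.2) :=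
  rfl

theorem basePower_eq_map (X : Subgroup (Perm Δ)) :
    (basePower X : Subgroup (Perm (Δ × ι))) =
      (Subgroup.pi Set.univ fun _ => X).map (baseHom Δ ι) := by
  rw [← Subgroup.closure_eq (Subgroup.map _ _), basePower]
  congr 1
  ext σ
  constructor
  · rintro ⟨g, hg, rfl⟩
    exact ⟨g, fun i _ => hg i, rfl⟩
  · rintro ⟨g, hg, rfl⟩
    exact ⟨g, fun i => hg i trivial, rfl⟩

theorem exists_eq_wreathPerm {σ : Perm (Δ × ι)}
    (hσ : ∀ u v : Δ × ι, (σ u).2 = (σ v).2 ↔ u.2 = v.2) :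
    ∃ (g : ι → Perm Δ) (h : Perm ι), σ = wreathPerm g h := by
  cases isEmpty_or_nonempty Δ with
  | inl _ => exact ⟨1, 1, Subsingleton.elim _ _⟩
  | inr hΔ =>
    obtain ⟨d⟩ := hΔ
    have hh : Function.Bijective fun i => (σ (d, i)).2 := by
      refine ⟨fun i j hij => (hσ (d, i) (d, j)).mp hij, fun j => ?_⟩
      obtain ⟨u, hu⟩ := σ.surjective (d, j)
      exact ⟨u.2, ((hσ (d, u.2) u).mpr rfl).trans (congrArg Prod.snd hu)⟩
    have hg (i : ι) : Function.Bijective fun x => (σ (x, i)).1 := by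
      refine ⟨fun x y hxy => ?_, fun y => ?_⟩
      · exact congrArg Prod.fst (σ.injective (Prod.ext hxy ((hσ (x, i) (y, i)).mpr rfl)))
      · obtain ⟨⟨x, j⟩, hx⟩ := σ.surjective (y, (σ (d, i)).2)
        obtain rfl : j = i := (hσ (x, j) (d, i)).mp (congrArg Prod.snd hx :)
        exact ⟨x, congrArg Prod.fst hx⟩
    refine ⟨fun i => Equiv.ofBijective _ (hg i), Equiv.ofBijective _ hh, Equiv.ext fun u => ?_⟩
    exact Prod.ext rfl ((hσ u (d, u.2)).mpr rfl)

theorem le_wreathProduct_top {K : Subgroup (Perm (Δ × ι))}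
    (hK : ∀ σ ∈ K, ∀ u v : Δ × ι, (σ u).2 = (σ v).2 ↔ u.2 = v.2) : K ≤ wreathProduct ⊤ ⊤ := by
  intro σ hσ
  obtain ⟨g, h, rfl⟩ := exists_eq_wreathPerm (hK σ hσ)
  exact Subgroup.subset_closure
    ⟨g, h, fun _ => Subgroup.mem_top _, Subgroup.mem_top _, rfl⟩

theorem exists_baseHom_eq {σ : Perm (Δ × ι)} (hσ : ∀ u, (σ u).2 = u.2) :
    ∃ g, baseHom Δ ι g = σ := by
  obtain ⟨g, h, rfl⟩ := exists_eq_wreathPerm (σ := σ) fun u v => by rw [hσ, hσ]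
  exact ⟨g, Equiv.ext fun u => Prod.ext rfl (hσ u).symm⟩

theorem isPretransitive_of_le_basePower {X : Subgroup (Perm Δ)} {N : Subgroup (Perm (Δ × ι))}
    (hNX : N ≤ basePower X) (i : ι) (hN : ∀ x y : Δ, (x, i) ∈ orbit N (y, i)) :
    IsPretransitive X Δ where
  exists_smul_eq x y := by
    obtain ⟨⟨σ, hσ⟩, hxy⟩ := hN y x
    rw [basePower_eq_map] at hNX
    obtain ⟨g, hg, rfl⟩ := hNX hσ
    exact ⟨⟨g i, hg i trivial⟩, congrArg Prod.fst hxy⟩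

end BaseGroup

section Factor

variable {Δ ι : Type*} [DecidableEq ι]

/-- The inclusion of `Sym(Δ)` into `Sym(Δ × ι)` as the `i`-th factor of the base group
`Sym(Δ)^ι`. -/
def factorHom (i : ι) : Perm Δ →* Perm (Δ × ι) :=
  (baseHom Δ ι).comp (MonoidHom.mulSingle (fun _ => Perm Δ) i)

@[simp]
theorem factorHom_apply_same (i : ι) (x : Perm Δ) (d : Δ) : factorHom i x (d, i) = (x d, i) := by
  simp [factorHom]

theorem factorHom_apply_of_ne {i : ι} (x : Perm Δ) {u : Δ × ι} (hu : u.2 ≠ i) :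
    factorHom i x u = u := by
  simp [factorHom, Pi.mulSingle_eq_of_ne hu]

theorem cycleType_factorHom [Fintype Δ] [DecidableEq Δ] [Fintype ι] (i : ι) (x : Perm Δ) :
    (factorHom i x).cycleType = x.cycleType :=
  cycleType_eq_of_semiconj (Function.Embedding.sectL Δ i)
    (fun d => (factorHom_apply_same i x d).symm)
    fun u hu => factorHom_apply_of_ne x fun h => hu ⟨u.1, Prod.ext rfl h.symm⟩

theorem factorHom_mem_basePower {X : Subgroup (Perm Δ)} {x : Perm Δ} (hx : x ∈ X) (i : ι) :
    factorHom i x ∈ basePower X := by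
  rw [basePower_eq_map]
  exact ⟨Pi.mulSingle i x, (Subgroup.mulSingle_mem_pi (H := fun _ => X) i x).mpr fun _ => hx, rfl⟩

theorem basePower_le_iff [Finite ι] {X : Subgroup (Perm Δ)} {K : Subgroup (Perm (Δ × ι))} :
    basePower X ≤ K ↔ ∀ i, X ≤ K.comap (factorHom i) := by
  simp only [basePower_eq_map, Subgroup.map_le_iff_le_comap, Subgroup.pi_le_iff,
    Subgroup.comap_comap, factorHom]

theorem exists_factorHom_eq_of_isCycle {c : Perm (Δ × ι)} (hc : c.IsCycle)
    (hsnd : ∀ u, (c u).2 = u.2) : ∃ i x, factorHom i x = c := by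
  obtain ⟨g, rfl⟩ := exists_baseHom_eq hsnd
  obtain ⟨u, -, hcyc⟩ := hc
  have hfix (j : ι) (hj : j ≠ u.2) : g j = 1 := by
    ext d
    by_contra hd
    obtain ⟨k, hk⟩ := hcyc (y := (d, j)) fun h => hd (congrArg Prod.fst h)
    rw [← map_zpow] at hk
    exact hj (congrArg Prod.snd hk).symm
  refine ⟨u.2, g u.2, congrArg (baseHom Δ ι) (funext fun j => ?_)⟩
  obtain rfl | hj := eq_or_ne j u.2
  · exact Pi.mulSingle_eq_same _ _
  · exact (Pi.mulSingle_eq_of_ne hj _).trans (hfix j hj).symm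

end Factor

section LinkedFibers

variable {Δ ι : Type*}

/-- A permutation group on `Δ × ι` has linked fibres when any two fibres `Δ × {i}` and `Δ × {j}`
are identified by an element of the group that acts as the identity on the coordinate in `Δ`. -/
def HasLinkedFibers (K : Subgroup (Perm (Δ × ι))) : Prop :=
  ∀ i j, ∃ τ ∈ K, ∀ d, τ (d, i) = (d, j)

theorem HasLinkedFibers.comap_factorHom_le [DecidableEq ι] {K : Subgroup (Perm (Δ × ι))}
    (hK : HasLinkedFibers K) (i j : ι) : K.comap (factorHom i) ≤ K.comap (factorHom j) := by
  intro x hx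
  obtain ⟨τ, hτK, hτ⟩ := hK i j
  have hconj : factorHom j x = τ * factorHom i x * τ⁻¹ := by
    rw [eq_mul_inv_iff_mul_eq]
    ext1 ⟨d, l⟩
    obtain rfl | hl := eq_or_ne l i
    · simp [hτ]
    · have hne : (τ (d, l)).2 ≠ j := by
        intro h
        have heq : τ (d, l) = τ ((τ (d, l)).1, i) := by rw [hτ, ← h]
        exact hl (congrArg Prod.snd (τ.injective heq))
      simp [factorHom_apply_of_ne x hne, factorHom_apply_of_ne x (u := (d, l)) hl]
  rw [Subgroup.mem_comap, hconj]
  exact K.mul_mem (K.mul_mem hτK hx) (K.inv_mem hτK)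

theorem HasLinkedFibers.basePower_le [DecidableEq ι] [Finite ι] {K : Subgroup (Perm (Δ × ι))}
    (hK : HasLinkedFibers K) {X : Subgroup (Perm Δ)} {i : ι} (hX : X ≤ K.comap (factorHom i)) :
    basePower X ≤ K :=
  basePower_le_iff.mpr fun j => hX.trans (hK.comap_factorHom_le i j)

variable [Fintype Δ] [DecidableEq Δ] [Fintype ι] [DecidableEq ι] {K : Subgroup (Perm (Δ × ι))}

theorem HasLinkedFibers.exists_mem_cycleSubgroup_comap (hK : HasLinkedFibers K) (i : ι)
    {c : Perm (Δ × ι)} (hcK : c ∈ K) {n : ℕ} (hn : c.cycleType = {n})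
    (hsnd : ∀ u, (c u).2 = u.2) :
    ∃ x ∈ cycleSubgroup (K.comap (factorHom i)) n, x.cycleType = {n} ∧ ∃ j, factorHom j x = c := by
  obtain ⟨j, x, rfl⟩ := exists_factorHom_eq_of_isCycle (cycleType_eq_singleton_iff.mp hn).1 hsnd
  rw [cycleType_factorHom] at hn
  exact ⟨x, mem_cycleSubgroup (hK.comap_factorHom_le j i hcK) hn, hn, j, rfl⟩

theorem HasLinkedFibers.cycleSubgroup_le_basePower (hK : HasLinkedFibers K) (i : ι) {n : ℕ}
    (hsnd : ∀ c ∈ cycleSubgroup K n, ∀ u, (c u).2 = u.2) :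
    cycleSubgroup K n ≤ basePower (cycleSubgroup (K.comap (factorHom i)) n) := by
  refine (Subgroup.closure_le _).mpr fun c ⟨hcK, hn⟩ => ?_
  obtain ⟨x, hx, -, j, rfl⟩ := hK.exists_mem_cycleSubgroup_comap i hcK hn
    (hsnd c (mem_cycleSubgroup hcK hn))
  exact factorHom_mem_basePower hx j

theorem HasLinkedFibers.isPretransitive_cycleSubgroup_comap (hK : HasLinkedFibers K) (i : ι) {n : ℕ}
    (horbit : ∀ u v : Δ × ι, u ∈ orbit (cycleSubgroup K n) v ↔ u.2 = v.2) :
    IsPretransitive (cycleSubgroup (K.comap (factorHom i)) n) Δ :=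
  have hsnd : ∀ c ∈ cycleSubgroup K n, ∀ u, (c u).2 = u.2 := fun c hc _ =>
    (horbit _ _).mp ⟨⟨c, hc⟩, rfl⟩
  isPretransitive_of_le_basePower (hK.cycleSubgroup_le_basePower i hsnd) i
    fun x y => (horbit (x, i) (y, i)).mpr rfl

end LinkedFibers

section Coordinates

theorem apply_mem_orbit_apply_iff {Ω : Type*} {G N : Subgroup (Perm Ω)}
    (hGN : G ≤ Subgroup.normalizer N) {g : Perm Ω} (hg : g ∈ G) (a b : Ω) :
    g a ∈ orbit N (g b) ↔ a ∈ orbit N b := by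
  have hconj : ∀ h ∈ G, ∀ a b, a ∈ orbit N b → h a ∈ orbit N (h b) := by
    rintro h hh _ b ⟨⟨n, hn⟩, rfl⟩
    exact ⟨⟨h * n * h⁻¹, Subgroup.le_normalizer_iff.mp hGN h hh n hn⟩,
      by simp [Subgroup.smul_def]⟩
  refine ⟨fun h => ?_, hconj g hg a b⟩
  simpa using hconj g⁻¹ (G.inv_mem hg) _ _ h

theorem mem_orbit_mapPermGroup_iff {α β : Type*} (f : α ≃ β) (N : Subgroup (Perm α)) (u v : β) :
    u ∈ orbit (mapPermGroup f N) v ↔ f.symm u ∈ orbit N (f.symm v) := by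
  constructor
  · rintro ⟨⟨_, n, hn, rfl⟩, rfl⟩
    exact ⟨⟨n, hn⟩, (f.symm_apply_apply _).symm⟩
  · rintro ⟨⟨n, hn⟩, h⟩
    exact ⟨⟨_, n, hn, rfl⟩, (f.eq_symm_apply.mp h :)⟩

theorem exists_equiv_prod_hasLinkedFibers {Ω Δ ι : Type*} {G : Subgroup (Perm Ω)}
    (hG : IsTransitivePermGroup G) {π : Ω → ι} (hπ : Function.Surjective π)
    (hinv : ∀ g ∈ G, ∀ a b, π (g a) = π (g b) ↔ π a = π b) {i₀ : ι}
    (e : Δ ≃ {a // π a = i₀}) :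
    ∃ f : Ω ≃ Δ × ι, (∀ a, (f a).2 = π a) ∧ HasLinkedFibers (mapPermGroup f G) := by
  have htransport (i : ι) : ∃ τ ∈ G, ∀ a, π a = i₀ ↔ π (τ a) = i := by
    obtain ⟨a₀, rfl⟩ := hπ i₀
    obtain ⟨b, rfl⟩ := hπ i
    obtain ⟨τ, hτ, rfl⟩ := hG a₀ b
    exact ⟨τ, hτ, fun a => (hinv τ hτ a a₀).symm⟩
  choose τ hτG hτ using htransport
  let f : Ω ≃ Δ × ι := (Equiv.sigmaFiberEquiv π).symm.trans <|
    (Equiv.sigmaCongrRight fun i => (e.trans ((τ i).subtypeEquiv (hτ i))).symm).trans <|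
      (Equiv.sigmaEquivProd ι Δ).trans (Equiv.prodComm ι Δ)
  have hf (d : Δ) (i : ι) : f.symm (d, i) = τ i (e d) := rfl
  refine ⟨f, fun _ => rfl, fun i j => ?_⟩
  refine ⟨_, ⟨τ j * (τ i)⁻¹, G.mul_mem (hτG j) (G.inv_mem (hτG i)), rfl⟩, fun d => ?_⟩
  change f ((τ j * (τ i)⁻¹) (f.symm (d, i))) = (d, j)
  rw [← Equiv.eq_symm_apply, hf, hf]
  simp

theorem exists_equiv_fin_prod_fin {Ω : Type*} [Finite Ω] [Nonempty Ω] {G N : Subgroup (Perm Ω)}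
    (hG : IsTransitivePermGroup G) (hGN : G ≤ Subgroup.normalizer N) :
    ∃ (m k : ℕ) (f : Ω ≃ Fin m × Fin k), HasLinkedFibers (mapPermGroup f G) ∧
      ∀ u v : Fin m × Fin k, u ∈ orbit (mapPermGroup f N) v ↔ u.2 = v.2 := by
  obtain ⟨k, ⟨eι⟩⟩ := Finite.exists_equiv_fin (Quotient (MulAction.orbitRel N Ω))
  let π : Ω → Fin k := fun a => eι ⟦a⟧
  have hπ (a b : Ω) : π a = π b ↔ a ∈ orbit N b :=
    eι.injective.eq_iff.trans (Quotient.eq.trans MulAction.orbitRel_apply)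
  obtain ⟨a₀⟩ := ‹Nonempty Ω›
  obtain ⟨m, ⟨eΔ⟩⟩ := Finite.exists_equiv_fin {a // π a = π a₀}
  obtain ⟨f, hf, hlink⟩ := exists_equiv_prod_hasLinkedFibers hG
    (eι.surjective.comp Quotient.mk_surjective)
    (fun g hg a b => ((hπ _ _).trans (apply_mem_orbit_apply_iff hGN hg a b)).trans (hπ a b).symm)
    eΔ.symm
  refine ⟨m, k, f, hlink, fun u v => ?_⟩
  rw [mem_orbit_mapPermGroup_iff, ← hπ, ← f.apply_symm_apply u, ← f.apply_symm_apply v]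
  simp only [f.symm_apply_apply]
  exact Eq.congr (hf _).symm (hf _).symm

end Coordinates

/-- Corollary `coro:JordanNP`.  If a transitive permutation group
`G` of degree `n` contains a `p`-cycle for a prime `p`, then there are `m, k` with
`p ≤ m`, `n = m * k`, and transitive groups `X ≤ Y` of degree `m` with `X` primitive
and containing a `p`-cycle, such that up to permutation isomorphism
`X^k ≤ G ≤ Y ≀ Sym(k)` with `X^k` in the base group; moreover if `p < m` then `X`
is 2-transitive. -/
theorem statement_13 {Ω : Type} [Fintype Ω] [DecidableEq Ω] (G : Subgroup (Equiv.Perm Ω))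
    (hG : IsTransitivePermGroup G) (n : ℕ) (hn : Fintype.card Ω = n)
    (p : ℕ) (hp : p.Prime)
    (hcyc : ∃ g ∈ G, Equiv.Perm.IsCycle g ∧ (Equiv.Perm.support g).card = p) :
    ∃ (m k : ℕ) (X Y : Subgroup (Equiv.Perm (Fin m))) (f : Ω ≃ Fin m × Fin k),
      p ≤ m ∧ n = m * k ∧ X ≤ Y ∧
      IsTransitivePermGroup X ∧ IsTransitivePermGroup Y ∧ IsPrimitivePermGroup X ∧
      (∃ x ∈ X, Equiv.Perm.IsCycle x ∧ (Equiv.Perm.support x).card = p) ∧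
      basePower X ≤ mapPermGroup f G ∧
      mapPermGroup f G ≤ wreathProduct Y (⊤ : Subgroup (Equiv.Perm (Fin k))) ∧
      (p < m → Is2TransitivePermGroup X) := by
  simp only [← cycleType_eq_singleton_iff] at hcyc ⊢
  obtain ⟨c, hcG, hc⟩ := hcyc
  obtain ⟨a, -⟩ := (cycleType_eq_singleton_iff.mp hc).1
  have : Nonempty Ω := ⟨a⟩
  obtain ⟨m, k, f, hlink, horbit⟩ := exists_equiv_fin_prod_fin hG (le_normalizer_cycleSubgroup G p)
  rw [← cycleSubgroup_mapPermGroup] at horbit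
  rw [← cycleType_permMapEquiv f] at hc
  replace hcG : permMapEquiv f c ∈ mapPermGroup f G := ⟨c, hcG, rfl⟩
  obtain ⟨x, hx, hxp, -⟩ := hlink.exists_mem_cycleSubgroup_comap (f a).2 hcG hc
    fun u => (horbit _ u).mp ⟨⟨_, mem_cycleSubgroup hcG hc⟩, rfl⟩
  obtain ⟨hxcyc, hxcard⟩ := cycleType_eq_singleton_iff.mp hxp
  have hprim := isPreprimitive_cycleSubgroup hp
    (h := hlink.isPretransitive_cycleSubgroup_comap (f a).2 horbit)
  refine ⟨m, k, _, ⊤, f, ?_, ?_, le_top, isTransitivePermGroup_iff.mpr inferInstance,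
    fun d d' => ⟨swap d d', Subgroup.mem_top _, swap_apply_left d d'⟩,
    isPrimitivePermGroup_of_isPreprimitive, ⟨x, hx, hxp⟩,
    hlink.basePower_le (cycleSubgroup_le _ p),
    le_wreathProduct_top fun σ hσ u v => ?_, fun hlt => ?_⟩
  · simpa [hxcard] using x.support.card_le_univ
  · simpa using hn.symm.trans (Fintype.card_congr f)
  · rw [← horbit, ← horbit, apply_mem_orbit_apply_iff (le_normalizer_cycleSubgroup _ p) hσ]
  · exact is2TransitivePermGroup_of_isCycle_mem hx hxcyc (by simpa [hxcard] using hlt)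
end
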